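/- arXiv:math/0403094 — 2 statements merged into one kernel-verified Lean document; each statement's English description precedes it below -/
import Mathlib

section
/- Let r ≥ 3. In the partition lattice Π_{2r}, the blocker of the antichain fi((2^r)) of all perfect-matching-type set partitions (r blocks of size 2) is fi((r+1, 1^{r-1})), and fi((2^r)) does not have the Turán property: there is an fi((2^r))-intersecting set of atoms of cardinality 2r − 1 (the edges of a star at a fixed vertex), which is strictly smaller than |Λ(b)| = (r+1)r/2 for every b ∈ fi((2^r))*. -/
open Finset

/-- The blocker of a set `A` in a poset with bottom element: the minimal elements among
those having a common atom with every member of `A`. -/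
def blocker {P : Type*} [PartialOrder P] [OrderBot P] (A : Set P) : Set P :=
  {x | (∀ a ∈ A, ∃ l : P, IsAtom l ∧ l ≤ x ∧ l ≤ a) ∧
    ∀ y : P, (∀ a ∈ A, ∃ l : P, IsAtom l ∧ l ≤ y ∧ l ≤ a) → y ≤ x → y = x}

/-- An antichain in a poset with bottom element, in the sense of Björner–Hultman:
a nonempty set avoiding `⊥` whose elements are pairwise incomparable. -/
def IsAnti {P : Type*} [PartialOrder P] [OrderBot P] (A : Set P) : Prop :=
  A.Nonempty ∧ ⊥ ∉ A ∧ IsAntichain (· ≤ ·) A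

/-- The partition lattice `Π_n`: set partitions of `{1,…,n}`, ordered by refinement. -/
abbrev SetPart (n : ℕ) := Finpartition (univ : Finset (Fin n))

/-- The shape of a set partition: the number partition formed by its block sizes. -/
def shape {n : ℕ} (σ : SetPart n) : Nat.Partition n where
  parts := σ.parts.val.map Finset.card
  parts_pos := by
    intro i hi
    simp only [Multiset.mem_map, Finset.mem_val] at hi
    obtain ⟨p, hp, rfl⟩ := hi
    exact Finset.card_pos.mpr (σ.nonempty_of_mem_parts hp)
  parts_sum := by
    have h := σ.sum_card_parts
    rw [Finset.sum] at h
    rw [h, card_univ, Fintype.card_fin]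

/-- The fiber under the shape map of a set `S` of number partitions: all set
partitions whose shape lies in `S`. -/
def fi {n : ℕ} (S : Set (Nat.Partition n)) : Set (SetPart n) :=
  {σ | shape σ ∈ S}

/-- The hook-shaped number partition `(p, 1^{n-p})`: one part equal to `p` and
`n - p` parts equal to `1`. -/
def hook (n p : ℕ) (hp : 0 < p) (hpn : p ≤ n) : Nat.Partition n where
  parts := p ::ₘ Multiset.replicate (n - p) 1
  parts_pos := by
    intro i hi
    simp only [Multiset.mem_cons, Multiset.mem_replicate] at hi
    rcases hi with rfl | ⟨-, rfl⟩
    · exact hp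
    · exact one_pos
  parts_sum := by
    simp only [Multiset.sum_cons, Multiset.sum_replicate, smul_eq_mul, mul_one]
    omega

/-- The partition `(2^r)` of `2r`: `r` parts equal to `2` (the shape of a perfect
matching on `2r` points). -/
def matchingShape (r : ℕ) : Nat.Partition (2 * r) where
  parts := Multiset.replicate r 2
  parts_pos := by
    intro i hi
    rw [Multiset.eq_of_mem_replicate hi]
    exact two_pos
  parts_sum := by
    simp only [Multiset.sum_replicate, smul_eq_mul]
    omega

namespace MB

variable {n : ℕ}

def rel (σ : SetPart n) (a b : Fin n) : Prop := b ∈ σ.part a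

lemma rel_iff (σ : SetPart n) (a b : Fin n) : rel σ a b ↔ ∃ p ∈ σ.parts, a ∈ p ∧ b ∈ p := by
  unfold rel
  rw [σ.mem_part_iff_exists]
  constructor <;> rintro ⟨p, hp, h1, h2⟩ <;> exact ⟨p, hp, h2, h1⟩

lemma le_iff (σ τ : SetPart n) : σ ≤ τ ↔ ∀ a b, rel σ a b → rel τ a b := by
  constructor
  · intro h a b hab
    rw [rel_iff] at hab ⊢
    obtain ⟨p, hp, ha, hb⟩ := hab
    obtain ⟨q, hq, hpq⟩ := h hp
    exact ⟨q, hq, hpq ha, hpq hb⟩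
  · intro h p hp
    obtain ⟨a, ha⟩ := σ.nonempty_of_mem_parts hp
    refine ⟨τ.part a, by simp, ?_⟩
    intro b hb
    exact h a b ((rel_iff _ _ _).2 ⟨p, hp, ha, hb⟩)

lemma rel_refl (σ : SetPart n) (a : Fin n) : rel σ a a := by simp [rel]

lemma rel_symm {σ : SetPart n} {a b : Fin n} (h : rel σ a b) : rel σ b a := by
  rw [rel_iff] at h ⊢
  obtain ⟨p, hp, h1, h2⟩ := h
  exact ⟨p, hp, h2, h1⟩

lemma rel_bot {a b : Fin n} (h : rel (⊥ : SetPart n) a b) : a = b := by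
  rw [rel_iff] at h
  obtain ⟨p, hp, h1, h2⟩ := h
  rw [Finpartition.mem_bot_iff] at hp
  obtain ⟨c, -, rfl⟩ := hp
  simp at h1 h2
  rw [h1, h2]

def clumpSetoid (T : Finset (Fin n)) : Setoid (Fin n) where
  r a b := a = b ∨ (a ∈ T ∧ b ∈ T)
  iseqv := by
    constructor
    · intro x; exact Or.inl rfl
    · rintro x y (h | h)
      · exact Or.inl h.symm
      · exact Or.inr ⟨h.2, h.1⟩
    · rintro x y z (rfl | h) (rfl | h')
      · exact Or.inl rfl
      · exact Or.inr h'
      · exact Or.inr h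
      · exact Or.inr ⟨h.1, h'.2⟩

open Classical in
noncomputable def clump (T : Finset (Fin n)) : SetPart n := Finpartition.ofSetoid (clumpSetoid T)

lemma rel_clump (T : Finset (Fin n)) (a b : Fin n) :
    rel (clump T) a b ↔ a = b ∨ (a ∈ T ∧ b ∈ T) := by
  classical
  unfold rel clump
  rw [Finpartition.mem_part_ofSetoid_iff_rel]
  rfl

lemma clump_le_iff (T : Finset (Fin n)) (σ : SetPart n) :
    clump T ≤ σ ↔ ∀ a ∈ T, ∀ b ∈ T, rel σ a b := by
  rw [le_iff]
  constructor
  · intro h a ha b hb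
    exact h a b ((rel_clump _ _ _).2 (Or.inr ⟨ha, hb⟩))
  · intro h a b hab
    rcases (rel_clump _ _ _).1 hab with rfl | ⟨h1, h2⟩
    · exact rel_refl _ _
    · exact h a h1 b h2

lemma clump_pair_le_iff (a b : Fin n) (σ : SetPart n) :
    clump {a, b} ≤ σ ↔ rel σ a b := by
  rw [clump_le_iff]
  constructor
  · intro h; exact h a (by simp) b (by simp)
  · intro h x hx y hy
    simp only [mem_insert, mem_singleton] at hx hy
    rcases hx with rfl | rfl <;> rcases hy with rfl | rfl
    · exact rel_refl _ _
    · exact h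
    · exact rel_symm h
    · exact rel_refl _ _

lemma clump_subset {S T : Finset (Fin n)} (hS : 2 ≤ #S) (h : clump S ≤ clump T) : S ⊆ T := by
  rw [clump_le_iff] at h
  intro a ha
  obtain ⟨b, hb, hne⟩ := S.exists_mem_ne (by omega) a
  have := (rel_clump _ _ _).1 (h a ha b hb)
  rcases this with h | h
  · exact absurd h.symm hne
  · exact h.1

lemma clump_inj {S T : Finset (Fin n)} (hS : 2 ≤ #S) (hT : 2 ≤ #T) (h : clump S = clump T) :
    S = T :=
  (clump_subset hS h.le).antisymm (clump_subset hT h.ge)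

lemma exists_rel_of_ne_bot {σ : SetPart n} (h : σ ≠ ⊥) : ∃ a b, a ≠ b ∧ rel σ a b := by
  by_contra! hc
  apply h
  rw [← le_bot_iff, le_iff]
  intro a b hab
  by_cases e : a = b
  · subst e; exact rel_refl _ _
  · exact absurd hab (hc a b e)

lemma isAtom_pair {a b : Fin n} (hab : a ≠ b) : IsAtom (clump {a, b}) := by
  rw [isAtom_iff_le_of_ge]
  constructor
  · intro h
    have := (clump_pair_le_iff a b ⊥).1 h.le
    exact hab (rel_bot this)
  · intro σ hσ hle
    obtain ⟨x, y, hxy, hr⟩ := exists_rel_of_ne_bot hσ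
    have := (rel_clump _ _ _).1 ((le_iff _ _).1 hle x y hr)
    rw [clump_pair_le_iff]
    simp only [mem_insert, mem_singleton] at this
    have hr' := rel_symm hr
    rcases this with h | ⟨rfl | rfl, rfl | rfl⟩ <;> first | contradiction | assumption

lemma isAtom_iff (l : SetPart n) : IsAtom l ↔ ∃ a b, a ≠ b ∧ l = clump {a, b} := by
  constructor
  · intro h
    obtain ⟨a, b, hab, hr⟩ := exists_rel_of_ne_bot h.1
    refine ⟨a, b, hab, ?_⟩
    have h1 : clump {a, b} ≤ l := (clump_pair_le_iff _ _ _).2 hr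
    rcases h.le_iff.1 h1 with h2 | h2
    · exact absurd h2 (isAtom_pair hab).1
    · exact h2.symm
  · rintro ⟨a, b, hab, rfl⟩
    exact isAtom_pair hab

lemma exists_atom_iff (x y : SetPart n) :
    (∃ l : SetPart n, IsAtom l ∧ l ≤ x ∧ l ≤ y) ↔ ∃ a b, a ≠ b ∧ rel x a b ∧ rel y a b := by
  constructor
  · rintro ⟨l, hl, h1, h2⟩
    obtain ⟨a, b, hab, rfl⟩ := (isAtom_iff l).1 hl
    exact ⟨a, b, hab, (clump_pair_le_iff _ _ _).1 h1, (clump_pair_le_iff _ _ _).1 h2⟩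
  · rintro ⟨a, b, hab, h1, h2⟩
    exact ⟨_, isAtom_pair hab, (clump_pair_le_iff _ _ _).2 h1, (clump_pair_le_iff _ _ _).2 h2⟩

lemma mem_fi_matching (r : ℕ) (σ : SetPart (2 * r)) :
    σ ∈ fi {matchingShape r} ↔ ∀ p ∈ σ.parts, #p = 2 := by
  change shape σ = matchingShape r ↔ _
  rw [Nat.Partition.ext_iff]
  change σ.parts.val.map Finset.card = Multiset.replicate r 2 ↔ _
  rw [Multiset.eq_replicate]
  constructor
  · rintro ⟨-, h⟩ p hp
    exact h _ (Multiset.mem_map_of_mem _ hp)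
  · intro h
    refine ⟨?_, ?_⟩
    · have h1 := σ.sum_card_parts
      rw [Finset.sum_congr rfl h] at h1
      simp at h1 ⊢
      omega
    · intro b hb
      obtain ⟨p, hp, rfl⟩ := Multiset.mem_map.1 hb
      exact h p hp

lemma mem_fi_hook (n p : ℕ) (hp : 0 < p) (hpn : p ≤ n) (σ : SetPart n) :
    σ ∈ fi {hook n p hp hpn} ↔
      ∃ T ∈ σ.parts, #T = p ∧ ∀ q ∈ σ.parts, q ≠ T → #q = 1 := by
  change shape σ = hook n p hp hpn ↔ _
  rw [Nat.Partition.ext_iff]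
  change σ.parts.val.map Finset.card = p ::ₘ Multiset.replicate (n - p) 1 ↔ _
  have key : ∀ T ∈ σ.parts, σ.parts.val.map Finset.card =
      #T ::ₘ (σ.parts.erase T).val.map Finset.card := by
    intro T hT
    conv_lhs => rw [← Finset.insert_erase hT]
    rw [Finset.insert_val_of_notMem (by simp), Multiset.map_cons]
  constructor
  · intro h
    have : p ∈ σ.parts.val.map Finset.card := by rw [h]; simp
    obtain ⟨T, hT, rfl⟩ := Multiset.mem_map.1 this
    refine ⟨T, hT, rfl, ?_⟩
    rw [key T hT, Multiset.cons_inj_right, Multiset.eq_replicate] at h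
    intro q hq hne
    exact h.2 _ (Multiset.mem_map_of_mem _ (by
      exact Finset.mem_erase.2 ⟨hne, hq⟩))
  · rintro ⟨T, hT, rfl, h⟩
    rw [key T hT, Multiset.cons_inj_right, Multiset.eq_replicate]
    refine ⟨?_, ?_⟩
    · have h1 := σ.sum_card_parts
      rw [← Finset.add_sum_erase _ _ hT, Finset.sum_congr rfl (g := fun _ => 1)
        (fun q hq => h q (Finset.mem_of_mem_erase hq) (Finset.ne_of_mem_erase hq))] at h1
      simp only [sum_const, smul_eq_mul, mul_one, card_univ, Fintype.card_fin] at h1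
      rw [Multiset.card_map, Finset.card_val]
      omega
    · intro b hb
      obtain ⟨q, hq, rfl⟩ := Multiset.mem_map.1 hb
      have hq : q ∈ σ.parts.erase T := hq
      exact h q (Finset.mem_of_mem_erase hq) (Finset.ne_of_mem_erase hq)

/-- Any partition with all blocks of size at most `r` is avoided by some perfect matching. -/
lemma exists_matching (r : ℕ) (x : SetPart (2 * r)) (hx : ∀ p ∈ x.parts, #p ≤ r) :
    ∃ m ∈ fi {matchingShape r}, ∀ a b, a ≠ b → rel m a b → ¬ rel x a b := by
  classical
  have hne : ∀ a : Fin (2 * r), (x.part a).Nonempty := fun a => by simp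
  let f : Fin (2 * r) → Fin (2 * r) := fun a => (x.part a).min' (hne a)
  have hf : ∀ a b, f a = f b ↔ rel x a b := by
    intro a b
    constructor
    · intro h
      have h1 : f a ∈ x.part a := Finset.min'_mem _ _
      have h2 : f a ∈ x.part b := h ▸ Finset.min'_mem _ _
      have : x.part a = x.part b := x.eq_of_mem_parts (by simp) (by simp) h1 h2
      unfold rel
      rw [this]; simp
    · intro h
      have : x.part b = x.part a := (x.mem_part_iff_part_eq_part (by simp) (by simp)).1 h
      simp only [f, this]
  let e := Tuple.sort f
  have hmono : Monotone (f ∘ e) := Tuple.monotone_sort f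
  have sep : ∀ i j : Fin (2 * r), (j : ℕ) = i + r → ¬ rel x (e i) (e j) := by
    intro i j hij hrel
    have hsub : (Finset.Icc i j).image e ⊆ x.part (e i) := by
      intro y hy
      obtain ⟨k, hk, rfl⟩ := Finset.mem_image.1 hy
      rw [Finset.mem_Icc] at hk
      have h1 : f (e i) ≤ f (e k) := hmono hk.1
      have h2 : f (e k) ≤ f (e j) := hmono hk.2
      have h3 : f (e i) = f (e j) := (hf _ _).2 hrel
      exact (hf _ _).1 (le_antisymm h1 (h3 ▸ h2))
    have h1 := Finset.card_le_card hsub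
    rw [Finset.card_image_of_injective _ e.injective, Fin.card_Icc] at h1
    have h2 := hx (x.part (e i)) (by simp)
    omega
  let s : Setoid (Fin (2 * r)) := Setoid.ker (fun a => (e.symm a : ℕ) % r)
  have hs : ∀ a b, rel (Finpartition.ofSetoid s) a b ↔
      (e.symm a : ℕ) % r = (e.symm b : ℕ) % r := by
    intro a b
    unfold rel
    rw [Finpartition.mem_part_ofSetoid_iff_rel]
    rfl
  refine ⟨Finpartition.ofSetoid s, ?_, ?_⟩
  · rw [mem_fi_matching]
    intro p hp
    obtain ⟨a, ha⟩ := Finpartition.nonempty_of_mem_parts _ hp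
    have hpa := Finpartition.part_eq_of_mem _ hp ha
    have hlt := (e.symm a).isLt
    have hr : 0 < r := by omega
    have hc : (e.symm a : ℕ) % r < r := Nat.mod_lt _ hr
    set c := (e.symm a : ℕ) % r with hcdef
    have : p = {e ⟨c, by omega⟩, e ⟨c + r, by omega⟩} := by
      ext b
      rw [← hpa]
      change rel _ a b ↔ _
      rw [hs, ← hcdef, mem_insert, mem_singleton, ← Equiv.symm_apply_eq, ← Equiv.symm_apply_eq,
        Fin.ext_iff, Fin.ext_iff]
      have hb := (e.symm b).isLt
      generalize (e.symm b : ℕ) = k at hb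
      dsimp only
      by_cases hk : k < r
      · rw [Nat.mod_eq_of_lt hk]; omega
      · rw [Nat.mod_eq_sub_mod (by omega), Nat.mod_eq_of_lt (by omega)]; omega
    rw [this, Finset.card_pair]
    intro h
    have := e.injective h
    rw [Fin.ext_iff] at this
    dsimp only at this
    omega
  · intro a b hab hrel hx'
    rw [hs] at hrel
    have ha := (e.symm a).isLt
    have hb := (e.symm b).isLt
    have hne' : (e.symm a : ℕ) ≠ e.symm b := by
      intro h
      exact hab (e.symm.injective (Fin.ext h))
    have hcase : (e.symm b : ℕ) = e.symm a + r ∨ (e.symm a : ℕ) = e.symm b + r := by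
      generalize (e.symm a : ℕ) = k at *
      generalize (e.symm b : ℕ) = l at *
      by_cases hk : k < r <;> by_cases hl : l < r
      · rw [Nat.mod_eq_of_lt hk, Nat.mod_eq_of_lt hl] at hrel; omega
      · rw [Nat.mod_eq_of_lt hk, Nat.mod_eq_sub_mod (by omega), Nat.mod_eq_of_lt (by omega)] at hrel
        omega
      · rw [Nat.mod_eq_of_lt hl, Nat.mod_eq_sub_mod (by omega), Nat.mod_eq_of_lt (by omega)] at hrel
        omega
      · rw [Nat.mod_eq_sub_mod (a := k) (by omega), Nat.mod_eq_of_lt (a := k - r) (by omega),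
          Nat.mod_eq_sub_mod (a := l) (by omega), Nat.mod_eq_of_lt (a := l - r) (by omega)] at hrel
        omega
    rcases hcase with h | h
    · exact sep _ _ h (by simpa using hx')
    · exact sep _ _ h (by simpa using rel_symm hx')

lemma meets_iff (r : ℕ) (x : SetPart (2 * r)) :
    (∀ a ∈ fi {matchingShape r}, ∃ l : SetPart (2 * r), IsAtom l ∧ l ≤ x ∧ l ≤ a) ↔
      ∃ p ∈ x.parts, r + 1 ≤ #p := by
  constructor
  · intro h
    by_contra! hc
    obtain ⟨m, hm, h'⟩ := exists_matching r x (fun p hp => by have := hc p hp; omega)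
    obtain ⟨a, b, hab, h1, h2⟩ := (exists_atom_iff _ _).1 (h m hm)
    exact h' a b hab h2 h1
  · rintro ⟨p, hp, hcard⟩ m hm
    rw [exists_atom_iff]
    rw [mem_fi_matching] at hm
    have h1 := m.sum_card_parts
    rw [Finset.sum_congr rfl hm] at h1
    simp at h1
    obtain ⟨a, ha, b, hb, hab, he⟩ := Finset.exists_ne_map_eq_of_card_lt_of_maps_to
      (s := p) (t := m.parts) (f := m.part) (by omega) (fun a _ => m.part_mem.2 (mem_univ a))
    refine ⟨a, b, hab, (rel_iff _ _ _).2 ⟨p, hp, ha, hb⟩, ?_⟩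
    unfold rel
    rw [he]; simp

lemma mem_parts_clump {T : Finset (Fin n)} (hT : T.Nonempty) : T ∈ (clump T).parts := by
  obtain ⟨a, ha⟩ := hT
  have : (clump T).part a = T := by
    ext b
    change rel _ a b ↔ _
    rw [rel_clump]
    constructor
    · rintro (rfl | h)
      · exact ha
      · exact h.2
    · intro h; exact Or.inr ⟨ha, h⟩
  have h2 : (clump T).part a ∈ (clump T).parts := (clump T).part_mem.2 (mem_univ a)
  rwa [this] at h2

lemma clump_mem_hook (n p : ℕ) (hp : 0 < p) (hpn : p ≤ n) {T : Finset (Fin n)} (hT : #T = p) :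
    clump T ∈ fi {hook n p hp hpn} := by
  rw [mem_fi_hook]
  have hTm := mem_parts_clump (T := T) (Finset.card_pos.1 (by omega))
  refine ⟨T, hTm, hT, ?_⟩
  intro q hq hne
  rw [Finset.card_eq_one]
  obtain ⟨a, ha⟩ := Finpartition.nonempty_of_mem_parts _ hq
  refine ⟨a, ?_⟩
  ext b
  rw [mem_singleton]
  constructor
  · intro hb
    rcases (rel_clump T a b).1 ((rel_iff _ _ _).2 ⟨q, hq, ha, hb⟩) with h | h
    · exact h.symm
    · exact absurd (Finpartition.eq_of_mem_parts _ hq hTm ha h.1) hne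
  · rintro rfl; exact ha

lemma eq_clump_of_hook {σ : SetPart n} {T : Finset (Fin n)} (hT : T ∈ σ.parts)
    (h : ∀ q ∈ σ.parts, q ≠ T → #q = 1) : σ = clump T := by
  apply le_antisymm
  · rw [le_iff]
    intro a b hab
    rw [rel_clump]
    obtain ⟨p, hp, ha, hb⟩ := (rel_iff _ _ _).1 hab
    by_cases hpT : p = T
    · subst hpT; exact Or.inr ⟨ha, hb⟩
    · exact Or.inl (Finset.card_le_one.1 (h p hp hpT).le a ha b hb)
  · rw [clump_le_iff]
    intro a ha b hb
    exact (rel_iff _ _ _).2 ⟨T, hT, ha, hb⟩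

lemma blocker_eq (r : ℕ) (hr : 3 ≤ r) (hp : 0 < r + 1) (hpn : r + 1 ≤ 2 * r) :
    blocker (fi {matchingShape r}) = fi {hook (2 * r) (r + 1) hp hpn} := by
  ext x
  simp only [blocker, Set.mem_setOf_eq, meets_iff]
  constructor
  · rintro ⟨⟨p, hp, hc⟩, hmin⟩
    obtain ⟨T, hTp, hT⟩ := Finset.exists_subset_card_eq hc
    have := hmin (clump T) ⟨T, mem_parts_clump (Finset.card_pos.1 (by omega)), hT.ge⟩
      ((clump_le_iff _ _).2 fun a ha b hb => (rel_iff _ _ _).2 ⟨p, hp, hTp ha, hTp hb⟩)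
    rw [← this]
    exact clump_mem_hook _ _ _ _ hT
  · intro hx
    obtain ⟨T, hT, hTc, h⟩ := (mem_fi_hook _ _ _ _ _).1 hx
    refine ⟨⟨T, hT, hTc.ge⟩, ?_⟩
    rintro y ⟨q, hq, hqc⟩ hyx
    apply le_antisymm hyx
    obtain ⟨p, hp, hqp⟩ := hyx hq
    have hqp : q ⊆ p := hqp
    have h1 := Finset.card_le_card hqp
    have hpT : p = T := by
      by_contra hne
      have := h p hp hne
      omega
    subst hpT
    have hqe : q = p := Finset.eq_of_subset_of_card_le hqp (by omega)
    subst hqe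
    rw [eq_clump_of_hook hT h, clump_le_iff]
    intro a ha b hb
    exact (rel_iff _ _ _).2 ⟨q, hq, ha, hb⟩

lemma ncard_atoms (T : Finset (Fin n)) :
    {l : SetPart n | IsAtom l ∧ l ≤ clump T}.ncard = (#T).choose 2 := by
  have : {l : SetPart n | IsAtom l ∧ l ≤ clump T} =
      clump '' (Finset.powersetCard 2 T : Set (Finset (Fin n))) := by
    ext l
    simp only [Set.mem_setOf_eq, Set.mem_image, Finset.mem_coe, Finset.mem_powersetCard]
    constructor
    · rintro ⟨hl, hle⟩
      obtain ⟨a, b, hab, rfl⟩ := (isAtom_iff l).1 hl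
      have hc := Finset.card_pair hab
      exact ⟨{a, b}, ⟨clump_subset hc.ge hle, hc⟩, rfl⟩
    · rintro ⟨S, ⟨hS, hc⟩, rfl⟩
      obtain ⟨a, b, hab, rfl⟩ := Finset.card_eq_two.1 hc
      refine ⟨isAtom_pair hab, ?_⟩
      rw [clump_pair_le_iff, rel_clump]
      exact Or.inr ⟨hS (by simp), hS (by simp)⟩
  rw [this, Set.ncard_image_of_injOn, Set.ncard_coe_finset, Finset.card_powersetCard]
  intro S hS S' hS' he
  simp only [Finset.mem_coe, Finset.mem_powersetCard] at hS hS'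
  exact clump_inj hS.2.ge hS'.2.ge he

end MB

/-- Example 4.4: for `r ≥ 3`, in `Π_{2r}` the blocker of `fi((2^r))` is
`fi((r+1, 1^{r-1}))`, and `fi((2^r))` does not have the Turán property: the
`2r - 1` edges of a star form an `fi((2^r))`-intersecting set of atoms, smaller
than `|Λ(b)| = (r+1)r/2` for every `b` in the blocker. -/
theorem matching_blocker_and_not_turan (r : ℕ) (hr : 3 ≤ r) :
    blocker (fi {matchingShape r}) =
        fi {hook (2 * r) (r + 1) (by omega) (by omega)} ∧
      ∃ S : Set (SetPart (2 * r)),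
        (∀ l ∈ S, IsAtom l) ∧
        S.ncard = 2 * r - 1 ∧
        (∀ a ∈ fi {matchingShape r}, ∃ l ∈ S, l ≤ a) ∧
        (∀ b ∈ blocker (fi {matchingShape r}),
          {l : SetPart (2 * r) | IsAtom l ∧ l ≤ b}.ncard = (r + 1) * r / 2) ∧
        2 * r - 1 < (r + 1) * r / 2 := by
  refine ⟨MB.blocker_eq r hr _ _, ?_⟩
  let z : Fin (2 * r) := ⟨0, by omega⟩
  refine ⟨(fun i => MB.clump {z, i}) '' (((univ : Finset (Fin (2 * r))).erase z : Finset _) :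
    Set (Fin (2 * r))), ?_, ?_, ?_, ?_, ?_⟩
  · rintro l ⟨i, hi, rfl⟩
    have hi : i ≠ z := by simpa using hi
    exact MB.isAtom_pair hi.symm
  · rw [Set.ncard_image_of_injOn, Set.ncard_coe_finset, Finset.card_erase_of_mem (by simp)]
    · simp
    · intro i hi j hj hij
      have hi : i ≠ z := by simpa using hi
      have hj : j ≠ z := by simpa using hj
      have h := MB.clump_inj (Finset.card_pair hi.symm).ge (Finset.card_pair hj.symm).ge hij
      have h1 : i ∈ ({z, j} : Finset (Fin (2 * r))) := by rw [← h]; simp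
      simpa [hi] using h1
  · intro a ha
    rw [MB.mem_fi_matching] at ha
    have hc := ha (a.part z) (by simp)
    obtain ⟨i, hi, hne⟩ := Finset.exists_mem_ne (by omega) z (s := a.part z)
    exact ⟨_, ⟨i, by simpa using hne, rfl⟩, (MB.clump_pair_le_iff _ _ _).2 hi⟩
  · intro b hb
    rw [MB.blocker_eq r hr (by omega) (by omega), MB.mem_fi_hook] at hb
    obtain ⟨T, hT, hTc, h⟩ := hb
    rw [MB.eq_clump_of_hook hT h, MB.ncard_atoms, hTc, Nat.choose_two_right]
    simp
  · have : 4 * r ≤ (r + 1) * r := Nat.mul_le_mul_right r (by omega)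
    omega
end

section
/- Let q be a prime power, n ≥ 1, and 1 ≤ k ≤ n. In the lattice L_q^n of all linear subspaces of F_q^n ordered by inclusion, the antichain A_k consisting of all k-dimensional subspaces has the Turán property: the smallest cardinality of a set S of 1-dimensional subspaces (the atoms of L_q^n) such that every k-dimensional subspace contains a member of S equals 1 + q + q^2 + ⋯ + q^{n-k}, which is the number of 1-dimensional subspaces contained in an (n − k + 1)-dimensional subspace. -/
theorem turan_aux_step {F V : Type*} [Field F] [Fintype F] [AddCommGroup V] [Module F V]
    [Module.Finite F V] (n k i : ℕ) (hn : Module.finrank F V = n) (hik : i < k) (hkn : k ≤ n)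
    (S : Finset (Submodule F V)) (hS : ∀ W ∈ S, Module.finrank F W = 1)
    (hc : S.card < ∑ i ∈ Finset.range (n - k + 1), Fintype.card F ^ i)
    (X : Submodule F V) (hX : Module.finrank F X = i) (hXS : ∀ W ∈ S, ¬ W ≤ X) :
    ∃ Y : Submodule F V, Module.finrank F Y = i + 1 ∧ ∀ W ∈ S, ¬ W ≤ Y := by
  classical
  have : Finite V := Module.finite_of_finite F
  have hq : 1 < Fintype.card F := Fintype.one_lt_card
  have hcard : ∀ Y : Submodule F V, (Y : Set V).ncard = Fintype.card F ^ Module.finrank F Y := by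
    intro Y
    have := Module.natCard_eq_pow_finrank (K := F) (V := Y)
    rw [Nat.card_eq_fintype_card (α := F)] at this
    rw [← this]; rfl
  obtain ⟨v, hvX, hv⟩ : ∃ v : V, v ∉ X ∧ ∀ W ∈ S, v ∉ X ⊔ W := by
    by_contra! hcon
    have hcov : (Set.univ : Set V) ⊆
        (X : Set V) ∪ ⋃ W ∈ S, (((X ⊔ W : Submodule F V) : Set V) \ (X : Set V)) := by
      intro v _
      by_cases hvX : v ∈ X
      · exact Or.inl hvX
      · obtain ⟨W, hW, hvW⟩ := hcon v hvX
        exact Or.inr (Set.mem_biUnion hW ⟨hvW, hvX⟩)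
    have h1 := Set.ncard_le_ncard hcov (Set.toFinite _)
    have h2 := h1.trans (Set.ncard_union_le _ _)
    have h3 : (⋃ W ∈ S, (((X ⊔ W : Submodule F V) : Set V) \ (X : Set V))).ncard ≤
        ∑ W ∈ S, (((X ⊔ W : Submodule F V) : Set V) \ (X : Set V)).ncard :=
      Finset.set_ncard_biUnion_le _ _
    have h4 : ∑ W ∈ S, (((X ⊔ W : Submodule F V) : Set V) \ (X : Set V)).ncard ≤
        S.card * (Fintype.card F ^ (i + 1) - Fintype.card F ^ i) := by
      rw [← smul_eq_mul]
      apply Finset.sum_le_card_nsmul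
      intro W hW
      rw [Set.ncard_sdiff (show (X : Set V) ⊆ _ from (le_sup_left : X ≤ X ⊔ W)) (Set.toFinite _),
        hcard, hcard, hX]
      apply Nat.sub_le_sub_right
      apply Nat.pow_le_pow_right hq.le
      have := Submodule.finrank_add_le_finrank_add_finrank X W
      rw [hS W hW, hX] at this
      exact this
    have h5 : (Set.univ : Set V).ncard = Fintype.card F ^ n := by
      have := hcard ⊤
      rw [finrank_top, hn] at this
      simpa using this
    rw [h5, hcard X, hX] at h2
    have h6 := h2.trans (Nat.add_le_add_left (h3.trans h4) _)
    have hg := Nat.geomSum_eq hq (n - k + 1)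
    have hg' := geom_sum_mul_add (Fintype.card F - 1) (n - k + 1)
    rw [Nat.sub_add_cancel hq.le] at hg'
    generalize Fintype.card F = q at *
    obtain ⟨p, rfl⟩ : ∃ p, q = p + 1 := ⟨q - 1, by omega⟩
    simp only [Nat.add_sub_cancel] at hg'
    have e1 : (p+1)^(i+1) - (p+1)^i = (p+1)^i * p := by
      rw [pow_succ, Nat.mul_succ, Nat.add_sub_cancel]
    have e2 : (p+1)^n = (p+1)^i * (p+1)^(n-i) := by rw [← pow_add]; congr 1; omega
    rw [e1, e2] at h6
    have h7 : (p+1)^(n-k+1) ≤ (p+1)^(n-i) := Nat.pow_le_pow_right (by omega) (by omega)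
    have h8 : (p+1)^(n-i) ≤ 1 + S.card * p := by
      apply Nat.le_of_mul_le_mul_left _ (show 0 < (p+1)^i by positivity)
      linarith
    have h9 := Nat.mul_lt_mul_of_pos_right hc (show 0 < p by omega)
    omega
  refine ⟨X ⊔ F ∙ v, ?_, ?_⟩
  · have hv0 : v ≠ 0 := fun h => hvX (h ▸ X.zero_mem)
    have h := Submodule.finrank_sup_add_finrank_inf_eq X (F ∙ v)
    have hd : X ⊓ F ∙ v = ⊥ := by
      rw [← disjoint_iff]
      exact (Submodule.disjoint_span_singleton' hv0).2 hvX
    rw [hd, finrank_bot, finrank_span_singleton hv0, hX] at h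
    exact h
  · intro W hW hWY
    obtain ⟨w, hw, hwX⟩ := Set.not_subset.1 (hXS W hW)
    obtain ⟨x, hx, z, hz, hxz⟩ := Submodule.mem_sup.1 (hWY hw)
    obtain ⟨c, rfl⟩ := Submodule.mem_span_singleton.1 hz
    have hc0 : c ≠ 0 := by
      rintro rfl
      apply hwX
      rw [← hxz]; simpa using hx
    apply hv W hW
    have : v = c⁻¹ • (w - x) := by
      rw [← hxz, add_sub_cancel_left, smul_smul, inv_mul_cancel₀ hc0, one_smul]
    rw [this]
    exact Submodule.smul_mem _ _ (Submodule.sub_mem _ (Submodule.mem_sup_right hw)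
      (Submodule.mem_sup_left hx))

theorem turan_aux_greedy {F V : Type*} [Field F] [Fintype F] [AddCommGroup V] [Module F V]
    [Module.Finite F V] (n k : ℕ) (hn : Module.finrank F V = n) (hkn : k ≤ n)
    (S : Finset (Submodule F V)) (hS : ∀ W ∈ S, Module.finrank F W = 1)
    (hc : S.card < ∑ i ∈ Finset.range (n - k + 1), Fintype.card F ^ i) (i : ℕ) (hi : i ≤ k) :
    ∃ Y : Submodule F V, Module.finrank F Y = i ∧ ∀ W ∈ S, ¬ W ≤ Y := by
  induction i with
  | zero =>
    refine ⟨⊥, finrank_bot F V, fun W hW h => ?_⟩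
    have := hS W hW
    rw [le_bot_iff.1 h, finrank_bot] at this
    omega
  | succ i ih =>
    obtain ⟨X, hX, hXS⟩ := ih (by omega)
    exact turan_aux_step n k i hn (by omega) hkn S hS hc X hX hXS

theorem turan_aux_upper {F : Type*} [Field F] [Fintype F] (n k : ℕ) (hk : 1 ≤ k) (hkn : k ≤ n) :
    ∃ S : Finset (Submodule F (Fin n → F)),
      S.card ≤ ∑ i ∈ Finset.range (n - k + 1), Fintype.card F ^ i ∧
      (∀ W ∈ S, Module.finrank F W = 1) ∧
      ∀ X : Submodule F (Fin n → F), Module.finrank F X = k → ∃ W ∈ S, W ≤ X := by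
  classical
  obtain ⟨Y, hY⟩ : ∃ Y : Submodule F (Fin n → F), Module.finrank F Y = n - k + 1 := by
    obtain ⟨Y, hY, -⟩ := turan_aux_greedy (F := F) (V := Fin n → F) n n (by simp) le_rfl ∅ (by simp)
      (by simp) (n - k + 1) (by omega)
    exact ⟨Y, hY⟩
  have : Finite (Projectivization F Y) := inferInstance
  have := Fintype.ofFinite (Projectivization F Y)
  refine ⟨Finset.univ.image fun p : Projectivization F Y => p.submodule.map Y.subtype, ?_, ?_, ?_⟩
  · refine Finset.card_image_le.trans ?_
    have := Projectivization.card_of_finrank F Y hY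
    rw [Nat.card_eq_fintype_card, Nat.card_eq_fintype_card] at this
    rw [Finset.card_univ, this]
  · intro W hW
    obtain ⟨p, -, rfl⟩ := Finset.mem_image.1 hW
    rw [← (Submodule.equivMapOfInjective Y.subtype Y.injective_subtype p.submodule).finrank_eq]
    exact p.finrank_submodule
  · intro X hX
    have h := Submodule.finrank_sup_add_finrank_inf_eq X Y
    have h2 := Submodule.finrank_le (X ⊔ Y)
    rw [Module.finrank_fin_fun] at h2
    have h3 : X ⊓ Y ≠ ⊥ := by
      intro h0
      rw [h0, finrank_bot] at h
      omega
    obtain ⟨v, hv, hv0⟩ := Submodule.exists_mem_ne_zero_of_ne_bot h3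
    have hv0' : (⟨v, hv.2⟩ : Y) ≠ 0 := by simpa using hv0
    refine ⟨_, Finset.mem_image_of_mem _ (Finset.mem_univ (Projectivization.mk F _ hv0')), ?_⟩
    rw [Projectivization.submodule_mk, Submodule.map_span_le]
    simpa using hv.1


/-- Proposition 5.4 (blocking sets in `PG(n,q)`): in the lattice `L_q^n` of all linear
subspaces of `F_q^n` (where `q` is the cardinality of the finite field `F`), the
antichain of all `k`-dimensional subspaces has the Turán property: the smallest
cardinality of a set `S` of 1-dimensional subspaces (the atoms of `L_q^n`) meeting
every `k`-dimensional subspace equals `1 + q + ⋯ + q^{n-k}`, the number of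
1-dimensional subspaces of an `(n-k+1)`-dimensional space. -/
theorem grassmannian_turan_property {F : Type*} [Field F] [Fintype F]
    (n k : ℕ) (hk : 1 ≤ k) (hkn : k ≤ n) :
    sInf {m : ℕ | ∃ S : Finset (Submodule F (Fin n → F)), S.card = m ∧
        (∀ W ∈ S, Module.finrank F W = 1) ∧
        ∀ X : Submodule F (Fin n → F), Module.finrank F X = k → ∃ W ∈ S, W ≤ X} =
      ∑ i ∈ Finset.range (n - k + 1), Fintype.card F ^ i := by
  apply le_antisymm
  · obtain ⟨S, h1, h2, h3⟩ := turan_aux_upper (F := F) n k hk hkn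
    refine le_trans (Nat.sInf_le ?_) h1
    exact ⟨S, rfl, h2, h3⟩
  · obtain ⟨S₀, -, h2₀, h3₀⟩ := turan_aux_upper (F := F) n k hk hkn
    refine le_csInf ?_ ?_
    · exact ⟨S₀.card, S₀, rfl, h2₀, h3₀⟩
    rintro m ⟨S, rfl, h2, h3⟩
    by_contra! hlt
    obtain ⟨Y, hY, hYS⟩ := turan_aux_greedy (F := F) n k (by simp) hkn S h2 hlt k le_rfl
    obtain ⟨W, hW, hWY⟩ := h3 Y hY
    exact hYS W hW hWY
end
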